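/- arXiv:2205.00186 — 2 statements merged into one kernel-verified Lean document; each statement's English description precedes it below -/
import Mathlib

section
/- Let C be a finite nonempty type of class labels and fix a class c : C. Let α : C → ℝ be the clean class-posterior (α k ≥ 0 for all k and ∑_k α k = 1), let T : C → C → ℝ be a label-noise transition matrix (T k j ≥ 0 for all k, j and ∑_j T k j = 1 for each k), and define the noisy class-posterior α̃ : C → ℝ by α̃ j = ∑_k α k * T k j. Let ρ_c ∈ ℝ with 0 ≤ ρ_c < 1 be a noise bound satisfying T k c ≤ ρ_c for every k ≠ c. If α̃ c > (1 + ρ_c)/2, then α c > 1/2. -/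
theorem noisy_posterior_threshold_implies_clean_majority
    {C : Type*} [Fintype C] [Nonempty C] (c : C)
    (α : C → ℝ) (hα0 : ∀ k, 0 ≤ α k) (hα1 : ∑ k, α k = 1)
    (T : C → C → ℝ) (hT0 : ∀ k j, 0 ≤ T k j) (hT1 : ∀ k, ∑ j, T k j = 1)
    (αt : C → ℝ) (hαt : ∀ j, αt j = ∑ k, α k * T k j)
    (ρc : ℝ) (hρ0 : 0 ≤ ρc) (hρ1 : ρc < 1)
    (hTρ : ∀ k, k ≠ c → T k c ≤ ρc)
    (h : αt c > (1 + ρc) / 2) :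
    α c > 1 / 2 := by
  classical
  have hTc : T c c ≤ 1 := by
    rw [← hT1 c]
    exact Finset.single_le_sum (f := fun j => T c j) (fun j _ => hT0 c j) (Finset.mem_univ c)
  have key : αt c ≤ ∑ k, (α k * ρc + if k = c then α c * (1 - ρc) else 0) := by
    rw [hαt c]
    refine Finset.sum_le_sum fun k _ => ?_
    by_cases hk : k = c
    · subst hk
      rw [if_pos rfl]
      nlinarith [mul_le_mul_of_nonneg_left hTc (hα0 k)]
    · rw [if_neg hk, add_zero]
      exact mul_le_mul_of_nonneg_left (hTρ k hk) (hα0 k)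
  rw [Finset.sum_add_distrib, ← Finset.sum_mul, hα1, Finset.sum_ite_eq' Finset.univ c,
    if_pos (Finset.mem_univ c)] at key
  by_contra hc
  have hc' : α c ≤ 1 / 2 := not_lt.mp hc
  nlinarith [mul_le_mul_of_nonneg_right hc' (sub_nonneg.mpr hρ1.le)]
end

section
/- Let C be a finite type of class labels with at least two elements and fix a class c : C. Let α : C → ℝ satisfy α k ≥ 0 for all k and ∑_k α k = 1, let T : C → C → ℝ satisfy T k j ≥ 0 for all k, j and ∑_j T k j = 1 for each k, and define α̃ : C → ℝ by α̃ j = ∑_k α k * T k j. Let ρ_c ∈ ℝ with 0 ≤ ρ_c < 1 satisfy T k c ≤ ρ_c for every k ≠ c. If α̃ c > (1 + ρ_c)/2, then α k < α c for every k ≠ c; that is, c is the unique class maximizing the clean posterior α. -/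
theorem noisy_posterior_threshold_implies_unique_argmax
    {C : Type*} [Fintype C] [Nontrivial C] (c : C)
    (α : C → ℝ) (hα0 : ∀ k, 0 ≤ α k) (hα1 : ∑ k, α k = 1)
    (T : C → C → ℝ) (hT0 : ∀ k j, 0 ≤ T k j) (hT1 : ∀ k, ∑ j, T k j = 1)
    (αt : C → ℝ) (hαt : ∀ j, αt j = ∑ k, α k * T k j)
    (ρc : ℝ) (hρ0 : 0 ≤ ρc) (hρ1 : ρc < 1)
    (hTρ : ∀ k, k ≠ c → T k c ≤ ρc)
    (h : αt c > (1 + ρc) / 2) :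
    ∀ k, k ≠ c → α k < α c := by
  classical
  intro k hk
  have hTc : T c c ≤ 1 := by
    rw [← hT1 c]
    exact Finset.single_le_sum (fun j _ => hT0 c j) (Finset.mem_univ c)
  have e1 := Finset.add_sum_erase Finset.univ α (Finset.mem_univ c)
  have e2 := Finset.add_sum_erase Finset.univ (fun k => α k * T k c) (Finset.mem_univ c)
  have b1 : ∑ x ∈ Finset.univ.erase c, α x * T x c ≤ (∑ x ∈ Finset.univ.erase c, α x) * ρc := by
    rw [Finset.sum_mul]
    exact Finset.sum_le_sum fun x hx =>
      mul_le_mul_of_nonneg_left (hTρ x (Finset.ne_of_mem_erase hx)) (hα0 x)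
  have b2 : α k ≤ ∑ x ∈ Finset.univ.erase c, α x :=
    Finset.single_le_sum (fun j _ => hα0 j) (Finset.mem_erase.2 ⟨hk, Finset.mem_univ k⟩)
  have b3 : α c * T c c ≤ α c := mul_le_of_le_one_right (hα0 c) hTc
  rw [hαt, ← e2] at h
  rw [hα1] at e1
  have e3 : ∑ x ∈ Finset.univ.erase c, α x = 1 - α c := by linarith
  rw [e3] at b1 b2
  have : 1 / 2 < α c := by
    by_contra hh
    nlinarith
  linarith
end
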